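/- arXiv:2309.17042 — 3 statements merged into one kernel-verified Lean document; each statement's English description precedes it below -/
import Mathlib

section
/- Let V be a finite set of variables and let T be a finite set of m pairwise distinct terms over V, where a term is a pair t = (P_t, N_t) of disjoint subsets of V. Then the number of assignments σ : V → Bool that satisfy at least one term of T (i.e., for some t ∈ T, σ(v) = true for all v ∈ P_t and σ(v) = false for all v ∈ N_t) is at least m^(log 2 / log 3), i.e., at least m^(log₃ 2). -/
/-- The exponent `log₂ 3` version of the key inequality. -/
theorem dnf_key_ineq (p : ℝ) (hp : 1 ≤ p) (h2 : (2:ℝ) ^ p = 3) (a b : ℝ) (hb : 0 ≤ b)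
    (hab : b ≤ a) : a ^ p + b ^ p + b ^ p ≤ (a + b) ^ p := by
  rcases hb.eq_or_lt with rfl | hb0
  · have : (0:ℝ) ^ p = 0 := Real.zero_rpow (by linarith)
    simp [this]
  have ha : 0 < a := lt_of_lt_of_le hb0 hab
  have hc := convexOn_rpow hp
  have hw : (a - b) / a + b / a = 1 := by field_simp; ring
  have h0 : 0 ≤ (a - b) / a := div_nonneg (by linarith) ha.le
  have h1 : 0 ≤ b / a := by positivity
  have hx : a + b ∈ Set.Ici (0:ℝ) := by simp; linarith
  have hy : b ∈ Set.Ici (0:ℝ) := hb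
  have e1 := hc.2 hx hy h0 h1 hw
  have e2 := hc.2 hx hy h1 h0 (by linarith)
  simp only [smul_eq_mul] at e1 e2
  have q1 : (a - b) / a * (a + b) + b / a * b = a := by field_simp; ring
  have q2 : b / a * (a + b) + (a - b) / a * b = 2 * b := by field_simp; ring
  rw [q1] at e1
  rw [q2, Real.mul_rpow (by norm_num) hb, h2] at e2
  have hs : (a - b) / a = 1 - b / a := by linarith
  rw [hs] at e1 e2
  nlinarith

theorem dnf_card_cons {α : Type*} [Fintype α] [DecidableEq α] {n : ℕ}
    (T : Finset (Fin (n + 1) → α)) :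
    T.card = ∑ o : α, (Finset.univ.filter
      (fun t : Fin n → α => (Fin.cons o t : Fin (n + 1) → α) ∈ T)).card := by
  rw [Finset.card_eq_sum_card_fiberwise (f := fun t => t 0) (t := Finset.univ) (by simp)]
  refine Finset.sum_congr rfl fun o _ => ?_
  symm
  refine Finset.card_bij (fun t _ => (Fin.cons o t : Fin (n + 1) → α)) ?_ ?_ ?_
  · intro t ht
    simpa using ht
  · intro t _ t' _ h
    exact (Fin.cons_right_injective (α := fun _ => α) o) h
  · intro t ht
    simp only [Finset.mem_filter] at ht
    obtain ⟨ht, rfl⟩ := ht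
    exact ⟨Fin.tail t, by simpa using ht, by simp⟩

theorem dnf_fin (p : ℝ) (hp : 1 ≤ p) (h2 : (2:ℝ) ^ p = 3) (n : ℕ) :
    ∀ (S : Finset (Fin n → Bool)) (T : Finset (Fin n → Option Bool)),
      (∀ t ∈ T, ∀ σ : Fin n → Bool, (∀ v b, t v = some b → σ v = b) → σ ∈ S) →
      (T.card : ℝ) ≤ (S.card : ℝ) ^ p := by
  induction n with
  | zero =>
    intro S T h
    rcases T.eq_empty_or_nonempty with rfl | ⟨t, ht⟩
    · simp; positivity
    · have hS : (1:ℝ) ≤ S.card := by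
        exact_mod_cast Finset.card_pos.2 ⟨_, h t ht Fin.elim0 (fun v => v.elim0)⟩
      have hT : (T.card : ℝ) ≤ 1 := by
        exact_mod_cast Finset.card_le_one_of_subsingleton T
      exact hT.trans (Real.one_le_rpow hS (by linarith))
  | succ n ih =>
    intro S T h
    have key : ∀ (b : Bool) (o : Option Bool), (o = none ∨ o = some b) →
        ((Finset.univ.filter
          (fun t : Fin n → Option Bool => (Fin.cons o t : Fin (n + 1) → _) ∈ T)).card : ℝ) ≤
        ((Finset.univ.filter
          (fun t : Fin n → Bool => (Fin.cons b t : Fin (n + 1) → _) ∈ S)).card : ℝ) ^ p := by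
      intro b o ho
      apply ih
      intro t ht σ hσ
      simp only [Finset.mem_filter, Finset.mem_univ, true_and] at ht ⊢
      refine h _ ht _ ?_
      intro v c
      refine Fin.cases ?_ (fun i => ?_) v
      · rcases ho with rfl | rfl <;> simp
      · simpa using hσ i c
    rw [dnf_card_cons T, dnf_card_cons S, Fintype.sum_option, Fintype.sum_bool, Fintype.sum_bool]
    push_cast
    have k1 := key true none (Or.inl rfl)
    have k2 := key false none (Or.inl rfl)
    have k3 := key true (some true) (Or.inr rfl)
    have k4 := key false (some false) (Or.inr rfl)
    generalize ((Finset.univ.filter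
          (fun t : Fin n → Bool => (Fin.cons true t : Fin (n + 1) → _) ∈ S)).card) = x at *
    generalize ((Finset.univ.filter
          (fun t : Fin n → Bool => (Fin.cons false t : Fin (n + 1) → _) ∈ S)).card) = y at *
    have hx : (0:ℝ) ≤ x := by positivity
    have hy : (0:ℝ) ≤ y := by positivity
    rcases le_total (x:ℝ) y with hxy | hxy
    · have := dnf_key_ineq p hp h2 y x hx hxy
      rw [add_comm (y:ℝ)] at this
      linarith
    · have := dnf_key_ineq p hp h2 x y hy hxy
      linarith

/-- A DNF with `m` distinct terms over a finite variable set `V` has at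
least `m ^ (log 2 / log 3)` models. A term is a pair of disjoint finsets of
positive/negative variables. -/
theorem dnf_model_count_lower_bound {V : Type*} [Fintype V]
    (T : Finset (Finset V × Finset V))
    (hdisj : ∀ t ∈ T, Disjoint t.1 t.2) :
    ((T.card : ℝ) ^ (Real.log 2 / Real.log 3)) ≤
      (Nat.card {σ : V → Bool //
        ∃ t ∈ T, (∀ v ∈ t.1, σ v = true) ∧ (∀ v ∈ t.2, σ v = false)} : ℝ) := by
  classical
  have l2 : 0 < Real.log 2 := Real.log_pos (by norm_num)
  have l3 : 0 < Real.log 3 := Real.log_pos (by norm_num)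
  have l23 : Real.log 2 ≤ Real.log 3 := Real.log_le_log (by norm_num) (by norm_num)
  have hp : 1 ≤ Real.log 3 / Real.log 2 := (one_le_div l2).2 l23
  have h2 : (2:ℝ) ^ (Real.log 3 / Real.log 2) = 3 := by
    rw [Real.rpow_def_of_pos (by norm_num), mul_div_cancel₀ _ l2.ne', Real.exp_log (by norm_num)]
  let e := Fintype.equivFin V
  let f : Finset V × Finset V → Fin (Fintype.card V) → Option Bool := fun t i =>
    if e.symm i ∈ t.1 then some true else if e.symm i ∈ t.2 then some false else none
  let A : Finset (V → Bool) := Finset.univ.filter fun σ =>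
    ∃ t ∈ T, (∀ v ∈ t.1, σ v = true) ∧ (∀ v ∈ t.2, σ v = false)
  let S : Finset (Fin (Fintype.card V) → Bool) := A.image fun σ i => σ (e.symm i)
  have hA : Nat.card {σ : V → Bool //
        ∃ t ∈ T, (∀ v ∈ t.1, σ v = true) ∧ (∀ v ∈ t.2, σ v = false)} = A.card := by
    rw [Nat.card_eq_fintype_card, Fintype.card_subtype]
  have hS : S.card ≤ A.card := Finset.card_image_le
  have hf : Set.InjOn f T := by
    intro t ht s hs hts
    have hd := Finset.disjoint_left.1 (hdisj t ht)
    have hd' := Finset.disjoint_left.1 (hdisj s hs)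
    have hv : ∀ v, (v ∈ t.1 ↔ v ∈ s.1) ∧ (v ∈ t.2 ↔ v ∈ s.2) := by
      intro v
      have := congrFun hts (e v)
      simp only [f, Equiv.symm_apply_apply] at this
      have a := @hd v
      have b := @hd' v
      split_ifs at this <;> simp_all
    exact Prod.ext (Finset.ext fun v => (hv v).1) (Finset.ext fun v => (hv v).2)
  have main := dnf_fin _ hp h2 _ S (T.image f) (by
    intro t' ht' σ hσ
    obtain ⟨t, ht, rfl⟩ := Finset.mem_image.1 ht'
    refine Finset.mem_image.2 ⟨fun v => σ (e v), ?_, by simp⟩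
    simp only [A, Finset.mem_filter, Finset.mem_univ, true_and]
    refine ⟨t, ht, fun v hv => hσ _ _ (by simp [f, hv]), fun v hv => hσ _ _ ?_⟩
    have : v ∉ t.1 := Finset.disjoint_right.1 (hdisj t ht) hv
    simp [f, hv, this])
  rw [Finset.card_image_of_injOn hf] at main
  rw [hA]
  calc (T.card : ℝ) ^ (Real.log 2 / Real.log 3)
      ≤ ((S.card : ℝ) ^ (Real.log 3 / Real.log 2)) ^ (Real.log 2 / Real.log 3) :=
        Real.rpow_le_rpow (by positivity) main (by positivity)
    _ = S.card := by
        rw [← Real.rpow_mul (by positivity)]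
        have : Real.log 3 / Real.log 2 * (Real.log 2 / Real.log 3) = 1 := by field_simp
        rw [this, Real.rpow_one]
    _ ≤ A.card := by exact_mod_cast hS
end

section
/- Define the reflected binary code lists RBC : ℕ → List (List Bool) recursively by RBC 0 = [[]] and RBC (n+1) = (map (false :: ·) (RBC n)) ++ (map (true :: ·) (reverse (RBC n))). Then for every n: (i) RBC n has length 2^n, every entry of RBC n is a binary word of length n, and RBC n contains every binary word of length n exactly once; and (ii) any two consecutive entries of RBC n differ in exactly one position. -/
/-- The reflected binary code on `n` bits. -/
def RBC : ℕ → List (List Bool)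
  | 0 => [[]]
  | n + 1 => ((RBC n).map (false :: ·)) ++ (((RBC n).reverse).map (true :: ·))

/-- Number of positions below `n` at which two words disagree. -/
def RBCdist (n : ℕ) (u v : List Bool) : ℕ :=
  ((Finset.range n).filter fun j => u.getD j false ≠ v.getD j false).card

lemma RBCdist_cons (n : ℕ) (a b : Bool) (u v : List Bool) :
    RBCdist (n + 1) (a :: u) (b :: v) = RBCdist n u v + if a ≠ b then 1 else 0 := by
  simp only [RBCdist, Finset.card_filter, Finset.sum_range_succ']
  simp

lemma RBCdist_self (n : ℕ) (u : List Bool) : RBCdist n u u = 0 := by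
  simp [RBCdist]

lemma RBCdist_comm (n : ℕ) (u v : List Bool) : RBCdist n u v = RBCdist n v u := by
  simp only [RBCdist, ne_comm]

lemma RBC_chain (n : ℕ) : (RBC n).IsChain (fun u v => RBCdist n u v = 1) := by
  induction n with
  | zero => simp [RBC]
  | succ n ih =>
    rw [RBC, List.isChain_append]
    refine ⟨?_, ?_, ?_⟩
    · rw [List.isChain_map]
      simpa [RBCdist_cons] using ih
    · rw [List.isChain_map, List.isChain_reverse]
      simpa [RBCdist_cons, flip, RBCdist_comm] using ih.imp (fun u v h => (RBCdist_comm n v u).trans h)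
    · intro x hx y hy
      simp only [List.getLast?_map, List.head?_map, List.head?_reverse, Option.mem_def,
        Option.map_eq_some_iff] at hx hy
      obtain ⟨a, ha, rfl⟩ := hx
      obtain ⟨b, hb, rfl⟩ := hy
      rw [ha] at hb
      obtain rfl := Option.some.inj hb
      simp [RBCdist_cons, RBCdist_self]

lemma RBC_length (n : ℕ) : (RBC n).length = 2 ^ n := by
  induction n with
  | zero => simp [RBC]
  | succ n ih => simp [RBC, ih, pow_succ]; ring

lemma RBC_mem (n : ℕ) : ∀ w ∈ RBC n, w.length = n := by
  induction n with
  | zero => simp [RBC]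
  | succ n ih =>
    intro w hw
    simp only [RBC, List.mem_append, List.mem_map, List.mem_reverse] at hw
    rcases hw with ⟨a, ha, rfl⟩ | ⟨a, ha, rfl⟩ <;> simp [ih a ha]

lemma RBC_count (n : ℕ) : ∀ w : List Bool, w.length = n → (RBC n).count w = 1 := by
  induction n with
  | zero => intro w hw; simp [RBC, List.length_eq_zero_iff.mp hw]
  | succ n ih =>
    intro w hw
    cases w with
    | nil => simp at hw
    | cons a w =>
      have h := ih w (by simpa using hw)
      have hi : ∀ b : Bool, Function.Injective (fun l : List Bool => b :: l) :=
        fun b => List.cons_injective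
      have same : ∀ (b : Bool) (l : List (List Bool)),
          (l.map (b :: ·)).count (b :: w) = l.count w :=
        fun b l => List.count_map_of_injective l _ (hi b) w
      have diff : ∀ (b c : Bool) (l : List (List Bool)), b ≠ c →
          (l.map (b :: ·)).count (c :: w) = 0 := by
        intro b c l hbc
        apply List.count_eq_zero_of_not_mem
        simp [hbc]
      rw [RBC, List.count_append]
      cases a
      · rw [same, diff _ _ _ (by simp), h]
      · rw [same, diff _ _ _ (by simp), List.count_reverse, h]

/-- `RBC n` lists all `2^n` binary words of length `n`, each
exactly once, and consecutive words differ in exactly one position. -/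
theorem RBC_gray_code (n : ℕ) :
    (RBC n).length = 2 ^ n ∧
    (∀ w ∈ RBC n, w.length = n) ∧
    (∀ w : List Bool, w.length = n → (RBC n).count w = 1) ∧
    (∀ i : ℕ, i + 1 < (RBC n).length →
      ((Finset.range n).filter fun j =>
          ((RBC n).getD i []).getD j false ≠ ((RBC n).getD (i + 1) []).getD j false).card
        = 1) := by
  refine ⟨RBC_length n, RBC_mem n, RBC_count n, ?_⟩
  intro i hi
  have h := List.isChain_iff_getElem.mp (RBC_chain n) i hi
  rw [List.getD_eq_getElem _ _ (by omega), List.getD_eq_getElem _ _ hi]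
  exact h
end

section
/- Let maj : Bool → Bool → Bool → Bool be the ternary Boolean majority operation (maj(a,b,c) is true iff at least two of a, b, c are true), extended componentwise to vectors in Bool^n, i.e., to functions Fin n → Bool. For a nonempty set S of vectors in Bool^n, let Cl_maj(S) be the smallest subset of Bool^n that contains S and is closed under componentwise maj. Then for every v ∈ Bool^n, v ∈ Cl_maj(S) if and only if for every pair of coordinates i, j ∈ Fin n there exists s ∈ S with s(i) = v(i) and s(j) = v(j). In other words, membership in the closure under componentwise majority is characterized by the projections of S onto every 2 components. -/
/-- Componentwise closure of a set of Boolean vectors under the ternary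
majority operation: the smallest superset of `S` closed under componentwise
majority. -/
inductive ClMaj {n : ℕ} (S : Set (Fin n → Bool)) : (Fin n → Bool) → Prop
  | base : ∀ v ∈ S, ClMaj S v
  | maj : ∀ u v w : Fin n → Bool, ClMaj S u → ClMaj S v → ClMaj S w →
      ClMaj S (fun i => (u i && v i) || (v i && w i) || (u i && w i))

theorem ClMaj.exists_agree_on {n : ℕ} (S : Set (Fin n → Bool))
    (hS : S.Nonempty) (v : Fin n → Bool)
    (h : ∀ i j : Fin n, ∃ s ∈ S, s i = v i ∧ s j = v j) (T : Finset (Fin n)) :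
    ∃ u, ClMaj S u ∧ ∀ i ∈ T, u i = v i := by
  induction T using Finset.strongInduction with
  | H T ih =>
    by_cases hT : 2 < T.card
    · obtain ⟨a, b, c, ha, hb, hc, hab, hac, hbc⟩ := Finset.two_lt_card_iff.1 hT
      obtain ⟨x, hx, hx'⟩ := ih _ (Finset.erase_ssubset ha)
      obtain ⟨y, hy, hy'⟩ := ih _ (Finset.erase_ssubset hb)
      obtain ⟨z, hz, hz'⟩ := ih _ (Finset.erase_ssubset hc)
      refine ⟨_, ClMaj.maj x y z hx hy hz, fun i hi => ?_⟩
      have h1 : i ≠ a → x i = v i := fun e => hx' i (Finset.mem_erase.2 ⟨e, hi⟩)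
      have h2 : i ≠ b → y i = v i := fun e => hy' i (Finset.mem_erase.2 ⟨e, hi⟩)
      have h3 : i ≠ c → z i = v i := fun e => hz' i (Finset.mem_erase.2 ⟨e, hi⟩)
      by_cases e1 : i = a
      · have e2 : i ≠ b := by rw [e1]; exact hab
        have e3 : i ≠ c := by rw [e1]; exact hac
        simp only [h2 e2, h3 e3]
        cases x i <;> cases v i <;> rfl
      · by_cases e2 : i = b
        · have e3 : i ≠ c := by rw [e2]; exact hbc
          simp only [h1 e1, h3 e3]
          cases y i <;> cases v i <;> rfl
        · simp only [h1 e1, h2 e2]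
          cases z i <;> cases v i <;> rfl
    · have hc : T.card = 0 ∨ T.card = 1 ∨ T.card = 2 := by omega
      rcases hc with hc | hc | hc
      · obtain ⟨s, hs⟩ := hS
        rw [Finset.card_eq_zero] at hc
        exact ⟨s, ClMaj.base s hs, by simp [hc]⟩
      · obtain ⟨a, rfl⟩ := Finset.card_eq_one.1 hc
        obtain ⟨s, hs, h1, -⟩ := h a a
        exact ⟨s, ClMaj.base s hs, by simpa using h1⟩
      · obtain ⟨a, b, -, rfl⟩ := Finset.card_eq_two.1 hc
        obtain ⟨s, hs, h1, h2⟩ := h a b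
        exact ⟨s, ClMaj.base s hs, by simpa using ⟨h1, h2⟩⟩

/-- Baker–Pixley for the majority operation: for a nonempty set
`S` of vectors in `Bool^n`, a vector `v` belongs to the closure of `S` under
componentwise majority iff for all coordinates `i, j` some `s ∈ S` agrees with
`v` on both `i` and `j`. -/
theorem mem_clMaj_iff_pair_projections {n : ℕ} (S : Set (Fin n → Bool))
    (hS : S.Nonempty) (v : Fin n → Bool) :
    ClMaj S v ↔ ∀ i j : Fin n, ∃ s ∈ S, s i = v i ∧ s j = v j := by
  constructor
  · intro hv i j
    induction hv with
    | base v hv => exact ⟨v, hv, rfl, rfl⟩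
    | maj u v w _ _ _ hu hv hw =>
      have key : ∀ a b c a' b' c' : Bool,
          (a = (a && b || b && c || a && c) ∧ a' = (a' && b' || b' && c' || a' && c')) ∨
          (b = (a && b || b && c || a && c) ∧ b' = (a' && b' || b' && c' || a' && c')) ∨
          (c = (a && b || b && c || a && c) ∧ c' = (a' && b' || b' && c' || a' && c')) := by
        decide
      obtain ⟨s, hs, s1, s2⟩ := hu
      obtain ⟨t, ht, t1, t2⟩ := hv
      obtain ⟨r, hr, r1, r2⟩ := hw
      rcases key (u i) (v i) (w i) (u j) (v j) (w j) with k | k | k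
      · exact ⟨s, hs, s1.trans k.1, s2.trans k.2⟩
      · exact ⟨t, ht, t1.trans k.1, t2.trans k.2⟩
      · exact ⟨r, hr, r1.trans k.1, r2.trans k.2⟩
  · intro h
    obtain ⟨u, hu, hu'⟩ := ClMaj.exists_agree_on S hS v h Finset.univ
    have e : u = v := funext fun i => hu' i (Finset.mem_univ i)
    exact e ▸ hu
end
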